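/- Let p ≥ 1, ρ > 0, and let x ∈ ℝ^n be a nonzero vector. Let s* be the unique global minimizer over s ∈ ℝ of s ↦ |s|^p + (ρ/2)(s − ‖x‖₂)². Then s* ≥ 0, and v* = s*·x/‖x‖₂ is the unique global minimizer over v ∈ ℝ^n of v ↦ ‖v‖₂^p + (ρ/2)‖v − x‖₂². -/

import Mathlib

/-!
If `s* < 0`, then `-s*` has the same absolute value and is strictly closer to `‖x‖`, so `s* ≥ 0`.
For vectors, `‖v - x‖² = (‖v‖ - ‖x‖)² + 2 (‖v‖ ‖x‖ - ⟪v, x⟫)`, so by Cauchy–Schwarz the vector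
objective at `v` is at least the scalar objective at `‖v‖`, with equality at
`v* = (s* / ‖x‖) • x`. A vector `v ≠ v*` with `‖v‖ ≠ s*` loses strictly by the scalar hypothesis;
one with `‖v‖ = s*` is not a nonnegative multiple of `x`, so Cauchy–Schwarz is strict for it.
-/

/-- Norm-composition rule for the proximal operator of `g(z) = |z|^p`, `p ≥ 1`:
if `s*` is the unique global minimizer of `s ↦ |s|^p + (ρ/2)(s − ‖x‖)²` for a nonzero
vector `x`, then `s* ≥ 0` and `v* = s* · x / ‖x‖` is the unique global minimizer of
`v ↦ ‖v‖^p + (ρ/2)‖v − x‖²`. -/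
theorem stmt2 (n : ℕ) (p ρ : ℝ) (hp : 1 ≤ p) (hρ : 0 < ρ)
    (x : EuclideanSpace ℝ (Fin n)) (hx : x ≠ 0) (sstar : ℝ)
    (hs : ∀ s : ℝ, s ≠ sstar →
      |sstar| ^ p + (ρ / 2) * (sstar - ‖x‖) ^ 2 < |s| ^ p + (ρ / 2) * (s - ‖x‖) ^ 2) :
    0 ≤ sstar ∧
      ∀ v : EuclideanSpace ℝ (Fin n), v ≠ (sstar / ‖x‖) • x →
        ‖(sstar / ‖x‖) • x‖ ^ p + (ρ / 2) * ‖(sstar / ‖x‖) • x - x‖ ^ 2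
          < ‖v‖ ^ p + (ρ / 2) * ‖v - x‖ ^ 2 := by
  have hx0 : 0 < ‖x‖ := norm_pos_iff.mpr hx
  have h0 : 0 ≤ sstar := by
    by_contra! hneg
    have h := hs (-sstar) (by linarith)
    rw [abs_neg] at h
    nlinarith [mul_pos hρ (mul_pos (neg_pos.mpr hneg) hx0)]
  refine ⟨h0, fun v hv => ?_⟩
  have e1 : ‖(sstar / ‖x‖) • x‖ = sstar := by
    rw [norm_smul, Real.norm_of_nonneg (div_nonneg h0 hx0.le), div_mul_cancel₀ _ hx0.ne']
  have e2 : ‖(sstar / ‖x‖) • x - x‖ ^ 2 = (sstar - ‖x‖) ^ 2 := by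
    have : (sstar / ‖x‖) • x - x = ((sstar - ‖x‖) / ‖x‖) • x := by
      rw [sub_div, div_self hx0.ne', sub_smul, one_smul]
    rw [this, norm_smul, mul_pow, Real.norm_eq_abs, sq_abs, ← mul_pow, div_mul_cancel₀ _ hx0.ne']
  have e3 : ‖v - x‖ ^ 2 = ‖v‖ ^ 2 - 2 * inner ℝ v x + ‖x‖ ^ 2 := norm_sub_sq_real v x
  have hcs : inner ℝ v x ≤ ‖v‖ * ‖x‖ := real_inner_le_norm v x
  rw [e1, e2, e3]
  by_cases hr : ‖v‖ = sstar
  · have hlt : inner ℝ v x < ‖v‖ * ‖x‖ := by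
      refine lt_of_le_of_ne hcs fun heq => hv ?_
      have h := inner_eq_norm_mul_iff_real.mp heq
      rw [div_eq_inv_mul, mul_smul, ← hr, ← h, smul_smul, inv_mul_cancel₀ hx0.ne', one_smul]
    rw [hr] at hlt ⊢
    nlinarith [mul_pos hρ (sub_pos.mpr hlt)]
  · have h := hs ‖v‖ hr
    rw [abs_of_nonneg h0, abs_of_nonneg (norm_nonneg v)] at h
    nlinarith [mul_nonneg hρ.le (sub_nonneg.mpr hcs)]
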